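/- Let ω₁, ω₂, ω₃ be complex numbers, set α = −i·ω₁ω₂ω₃, β = ω₁ω₂ + ω₂ω₃ + ω₃ω₁, γ = i·(ω₁ + ω₂ + ω₃), and let A, B be constant N×N complex matrices. Define S(t) = I + A·exp(i(ω₂−ω₁)t) + B·exp(i(ω₃−ω₁)t), U(t) = i·S(t)⁻¹·(ω₁I + ω₂·A·exp(i(ω₂−ω₁)t) + ω₃·B·exp(i(ω₃−ω₁)t)), and V(t) = −S(t)⁻¹·(ω₁²I + ω₂²·A·exp(i(ω₂−ω₁)t) + ω₃²·B·exp(i(ω₃−ω₁)t)). Then at every real t such that S is invertible on a neighborhood of t, U and V are differentiable at t and satisfy the matrix system (EqUV): U'(t) = −U(t)² + V(t) and V'(t) = −U(t)·V(t) + α·I + β·U(t) + γ·V(t). -/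

import Mathlib

/-!
Up to the scalar factor `e^{iω₁t}`, `S` is the function
`W(t) = e^{iω₁t} I + e^{iω₂t} A + e^{iω₃t} B`, and `U = W⁻¹ W'`, `V = W⁻¹ W''`. Differentiating
`U` and `V` by the quotient rule `(W⁻¹ X)' = -(W⁻¹ W')(W⁻¹ X) + W⁻¹ X'` gives `U' = -U² + V` and
`V' = -U V + W⁻¹ W'''`. Since `iω₁, iω₂, iω₃` are the roots of `λ³ = γ λ² + β λ + α`, one has
`W''' = γ W'' + β W' + α W`, which closes the system.

The proof works with `S` itself and with the combinations weighted by powers of the `ωⱼ`; the factor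
`e^{iω₁t}` shows up as extra multiples of `ω₁` that cancel. The quotient rule is proved in a complete
normed algebra and then applied to matrices.
-/

open Filter

/-- Quotient rule for `S⁻¹ P` in a complete normed algebra. -/
theorem hasDerivAt_ringInverse_mul {R : Type*} [NormedRing R] [NormedAlgebra ℝ R]
    [CompleteSpace R] {S P : ℝ → R} {S' P' : R} {t : ℝ} (hS : HasDerivAt S S' t)
    (hP : HasDerivAt P P' t) (hu : IsUnit (S t)) :
    HasDerivAt (fun s => Ring.inverse (S s) * P s)
      (-(Ring.inverse (S t) * S' * (Ring.inverse (S t) * P t)) + Ring.inverse (S t) * P') t := by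
  obtain ⟨u, hu⟩ := hu
  have h1 := hasFDerivAt_ringInverse (𝕜 := ℝ) u
  rw [hu] at h1
  have h2 := (h1.comp_hasDerivAt t hS).mul hP
  refine h2.congr_deriv ?_
  simp [← hu, mul_assoc]

section MatrixQuotientRule

attribute [local instance] Matrix.linftyOpNormedRing Matrix.linftyOpNormedAlgebra

/-- Quotient rule for matrices. The `ℓ^∞` operator norm is used because it is submultiplicative;
it induces the same topology, hence the same derivatives, as the entrywise sup norm. -/
theorem hasDerivAt_matrix_inv_mul {N : ℕ} {S P : ℝ → Matrix (Fin N) (Fin N) ℂ}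
    {S' P' : Matrix (Fin N) (Fin N) ℂ} {t : ℝ} (hS : HasDerivAt S S' t)
    (hP : HasDerivAt P P' t) (hu : IsUnit (S t)) :
    HasDerivAt (fun s => (S s)⁻¹ * P s)
      (-((S t)⁻¹ * S' * ((S t)⁻¹ * P t)) + (S t)⁻¹ * P') t := by
  simp only [Matrix.nonsing_inv_eq_ringInverse]
  have : CompleteSpace (Matrix (Fin N) (Fin N) ℂ) := FiniteDimensional.complete ℝ _
  exact hasDerivAt_ringInverse_mul hS hP hu

end MatrixQuotientRule

attribute [local instance] Matrix.normedAddCommGroup Matrix.normedSpace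

/-- Derivative of a combination `a I + b e^{ct} A + d e^{et} B`. -/
theorem hasDerivAt_exp_comb {N : ℕ} (A B : Matrix (Fin N) (Fin N) ℂ) (a b c d e : ℂ) (t : ℝ) :
    HasDerivAt (fun s : ℝ => a • (1 : Matrix (Fin N) (Fin N) ℂ)
        + (b * Complex.exp (c * (s : ℂ))) • A + (d * Complex.exp (e * (s : ℂ))) • B)
      ((b * (c * Complex.exp (c * (t : ℂ)))) • A + (d * (e * Complex.exp (e * (t : ℂ)))) • B) t := by
  have key : ∀ c : ℂ, HasDerivAt (fun s : ℝ => Complex.exp (c * (s : ℂ)))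
      (c * Complex.exp (c * (t : ℂ))) t := by
    intro c
    have h := ((Complex.ofRealCLM.hasDerivAt (x := t)).const_mul c).cexp
    simpa [mul_comm] using h
  have h := ((hasDerivAt_const t (a • (1 : Matrix (Fin N) (Fin N) ℂ))).add
    (((key c).const_mul b).smul_const A)).add (((key e).const_mul d).smul_const B)
  exact h.congr_deriv (by simp)

/-- With `α = −i·ω₁ω₂ω₃`, `β = ω₁ω₂+ω₂ω₃+ω₃ω₁`, `γ = i(ω₁+ω₂+ω₃)` and
`S(t) = I + A·e^{i(ω₂−ω₁)t} + B·e^{i(ω₃−ω₁)t}`,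
`U(t) = i·S(t)⁻¹·(ω₁I + ω₂A·e^{i(ω₂−ω₁)t} + ω₃B·e^{i(ω₃−ω₁)t})`,
`V(t) = −S(t)⁻¹·(ω₁²I + ω₂²A·e^{i(ω₂−ω₁)t} + ω₃²B·e^{i(ω₃−ω₁)t})`,
at every `t` such that `S` is invertible on a neighborhood of `t`, `U` and `V` are
differentiable at `t` and satisfy the matrix system (EqUV). -/
theorem goldfish_stmt3 (N : ℕ) (hN : 0 < N) (ω₁ ω₂ ω₃ α β γ : ℂ)
    (hα : α = -Complex.I * (ω₁ * ω₂ * ω₃))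
    (hβ : β = ω₁ * ω₂ + ω₂ * ω₃ + ω₃ * ω₁)
    (hγ : γ = Complex.I * (ω₁ + ω₂ + ω₃))
    (A B : Matrix (Fin N) (Fin N) ℂ)
    (S U V : ℝ → Matrix (Fin N) (Fin N) ℂ)
    (hS : ∀ t : ℝ, S t = 1 + Complex.exp (Complex.I * (ω₂ - ω₁) * (t : ℂ)) • A
      + Complex.exp (Complex.I * (ω₃ - ω₁) * (t : ℂ)) • B)
    (hU : ∀ t : ℝ, U t = Complex.I • ((S t)⁻¹ *
      (ω₁ • (1 : Matrix (Fin N) (Fin N) ℂ)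
        + (ω₂ * Complex.exp (Complex.I * (ω₂ - ω₁) * (t : ℂ))) • A
        + (ω₃ * Complex.exp (Complex.I * (ω₃ - ω₁) * (t : ℂ))) • B)))
    (hV : ∀ t : ℝ, V t = -((S t)⁻¹ *
      (ω₁ ^ 2 • (1 : Matrix (Fin N) (Fin N) ℂ)
        + (ω₂ ^ 2 * Complex.exp (Complex.I * (ω₂ - ω₁) * (t : ℂ))) • A
        + (ω₃ ^ 2 * Complex.exp (Complex.I * (ω₃ - ω₁) * (t : ℂ))) • B))) :
    ∀ t : ℝ, (∀ᶠ s in nhds t, IsUnit (S s)) →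
      HasDerivAt U (-(U t * U t) + V t) t ∧
      HasDerivAt V (-(U t * V t) + α • (1 : Matrix (Fin N) (Fin N) ℂ)
        + β • U t + γ • V t) t := by
  intro t ht
  have hu := ht.self_of_nhds
  have hdet : IsUnit (S t).det := (Matrix.isUnit_iff_isUnit_det _).1 hu
  have hinv : (S t)⁻¹ * S t = 1 := Matrix.nonsing_inv_mul _ hdet
  have hSd := hasDerivAt_exp_comb A B 1 1 (Complex.I * (ω₂ - ω₁)) 1 (Complex.I * (ω₃ - ω₁)) t
  have hPd := hasDerivAt_exp_comb A B ω₁ ω₂ (Complex.I * (ω₂ - ω₁)) ω₃ (Complex.I * (ω₃ - ω₁)) t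
  have hQd := hasDerivAt_exp_comb A B (ω₁ ^ 2) (ω₂ ^ 2) (Complex.I * (ω₂ - ω₁)) (ω₃ ^ 2)
    (Complex.I * (ω₃ - ω₁)) t
  have hSf : S = fun s : ℝ => (1 : ℂ) • (1 : Matrix (Fin N) (Fin N) ℂ)
      + (1 * Complex.exp (Complex.I * (ω₂ - ω₁) * (s : ℂ))) • A
      + (1 * Complex.exp (Complex.I * (ω₃ - ω₁) * (s : ℂ))) • B := by
    funext s
    simp [hS s]
  rw [← hSf] at hSd
  have hU' := (hasDerivAt_matrix_inv_mul hSd hPd hu).const_smul Complex.I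
  have hV' := (hasDerivAt_matrix_inv_mul hSd hQd hu).neg
  have hUf := funext hU
  have hVf := funext hV
  have hSt := hS t
  have hUt := hU t
  have hVt := hV t
  set x := Complex.exp (Complex.I * (ω₂ - ω₁) * (t : ℂ)) with hx
  set y := Complex.exp (Complex.I * (ω₃ - ω₁) * (t : ℂ)) with hy
  set P := ω₁ • (1 : Matrix (Fin N) (Fin N) ℂ) + (ω₂ * x) • A + (ω₃ * y) • B with hP
  set Q := ω₁ ^ 2 • (1 : Matrix (Fin N) (Fin N) ℂ) + (ω₂ ^ 2 * x) • A + (ω₃ ^ 2 * y) • B with hQ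
  have hI : Complex.I * Complex.I = -1 := Complex.I_mul_I
  -- `S' = i P - i ω₁ S` and `P' = i Q - i ω₁ P`
  have e1 : (1 * (Complex.I * (ω₂ - ω₁) * x)) • A + (1 * (Complex.I * (ω₃ - ω₁) * y)) • B
      = Complex.I • P - (Complex.I * ω₁) • S t := by
    rw [hP, hSt]; module
  have e2 : (ω₂ * (Complex.I * (ω₂ - ω₁) * x)) • A + (ω₃ * (Complex.I * (ω₃ - ω₁) * y)) • B
      = Complex.I • Q - (Complex.I * ω₁) • P := by
    rw [hP, hQ]; module
  -- `Q' = i R - i ω₁ Q`, where Vieta's formulas express the cubic combination `R` by `Q`, `P`, `S`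
  have e3 : (ω₂ ^ 2 * (Complex.I * (ω₂ - ω₁) * x)) • A
        + (ω₃ ^ 2 * (Complex.I * (ω₃ - ω₁) * y)) • B
      = Complex.I • ((ω₁ + ω₂ + ω₃) • Q - (ω₁ * ω₂ + ω₂ * ω₃ + ω₃ * ω₁) • P
          + (ω₁ * ω₂ * ω₃) • S t) - (Complex.I * ω₁) • Q := by
    rw [hP, hQ, hSt]; module
  rw [e1, e2] at hU'
  rw [e1, e3] at hV'
  constructor
  · rw [hUf]
    refine hU'.congr_deriv ?_
    rw [← hUf, hUt, hVt]
    simp only [mul_sub, sub_mul, mul_smul_comm, smul_mul_assoc, hinv, one_mul,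
      smul_smul, smul_add, smul_sub, smul_neg]
    match_scalars <;> first | ring1 | linear_combination hI
  · rw [hVf]
    refine hV'.congr_deriv ?_
    rw [← hVf, hUt, hVt, hα, hβ, hγ]
    simp only [mul_add, mul_sub, sub_mul, add_mul, mul_smul_comm, smul_mul_assoc, hinv, one_mul,
      smul_smul, smul_add, smul_sub, smul_neg, mul_neg]
    module
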